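/- Assume moreover that G is nontrivial, and set I = Ĩ ∖ {i₀}. Then c_{ii} = 0 for all i ∈ Ĩ, c_{ij} = c_{ji} for all i, j, and the matrix (2δ_{ij} − c_{ij})_{i,j∈I} (with diagonal entries 2 and off-diagonal entries −c_{ij} ≤ 0) is symmetric and positive definite: Σ_{i,j∈I} x_i x_j (2δ_{ij} − c_{ij}) > 0 for every nonzero x : I → ℝ. -/

import Mathlib

open scoped BigOperators
open CategoryTheory Matrix

open scoped ComplexOrder in
open Classical in
lemma aux_conj_trace {G : Type} [Group G] [Fintype G] {n : Type} [Fintype n] [DecidableEq n]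
    (A : G →* Matrix n n ℂ) (g : G) : (starRingEnd ℂ) (trace (A g)) = trace (A g⁻¹) := by
  set H : Matrix n n ℂ := ∑ k : G, (A k)ᴴ * A k with hH
  have hpos : H.PosDef := by
    have h1 : H = 1 + ∑ k ∈ Finset.univ.erase (1 : G), (A k)ᴴ * A k := by
      rw [hH, ← Finset.add_sum_erase _ _ (Finset.mem_univ (1 : G))]; simp
    rw [h1]
    refine Matrix.PosDef.one.add_posSemidef ?_
    exact Matrix.posSemidef_sum _ fun k _ => Matrix.posSemidef_conjTranspose_mul_self _
  have hinv : (A g)ᴴ * H * A g = H := by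
    rw [hH, Finset.mul_sum, Finset.sum_mul]
    refine Fintype.sum_equiv (Equiv.mulRight g) _ _ fun k => ?_
    simp [conjTranspose_mul, Matrix.mul_assoc]
  have hu : IsUnit H.det := (Matrix.isUnit_iff_isUnit_det _).1 hpos.isUnit
  have hg : A g * A g⁻¹ = 1 := by rw [← map_mul]; simp
  have h2 : (A g)ᴴ * H = H * A g⁻¹ := by
    calc (A g)ᴴ * H = (A g)ᴴ * H * (A g * A g⁻¹) := by rw [hg, Matrix.mul_one]
      _ = _ := by rw [← Matrix.mul_assoc, hinv]
  have h3 : (A g)ᴴ = H * A g⁻¹ * H⁻¹ := by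
    rw [← h2, Matrix.mul_assoc, Matrix.mul_nonsing_inv _ hu, Matrix.mul_one]
  have h4 : trace (A g)ᴴ = trace (A g⁻¹) := by
    rw [h3, Matrix.trace_mul_comm, ← Matrix.mul_assoc, Matrix.nonsing_inv_mul _ hu, Matrix.one_mul]
  rw [← h4, Matrix.trace_conjTranspose]; rfl

lemma aux_root_pow {n : Type} [Fintype n] [DecidableEq n] (A : Matrix n n ℂ) (m : ℕ)
    (h : A ^ m = 1) (z : ℂ) (hz : A.charpoly.IsRoot z) : z ^ m = 1 := by
  have h1 := Matrix.mem_spectrum_of_isRoot_charpoly hz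
  have h2 : z ^ m ∈ spectrum ℂ (A ^ m) := spectrum.pow_mem_pow A m h1
  rw [h] at h2
  rcases isEmpty_or_nonempty n with hn | hn
  · exfalso
    have : A.charpoly = 1 := by simp
    rw [this] at hz; simp at hz
  · rw [spectrum.one_eq] at h2
    simpa using h2

lemma aux_integral {n : Type} [Fintype n] [DecidableEq n] (A : Matrix n n ℂ) (m : ℕ) (hm : 0 < m)
    (h : A ^ m = 1) : IsIntegral ℤ (trace A) := by
  rw [Matrix.trace_eq_sum_roots_charpoly]
  refine IsIntegral.multiset_sum fun z hz => ?_
  have := aux_root_pow A m h z (Polynomial.isRoot_of_mem_roots hz)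
  refine IsIntegral.of_pow hm ?_
  rw [this]; exact isIntegral_one

noncomputable def auxMat {G : Type} [Group G] (V : FDRep ℂ G) :
    G →* Matrix (Fin (Module.finrank ℂ V)) (Fin (Module.finrank ℂ V)) ℂ :=
  ((LinearMap.toMatrixAlgEquiv (Module.finBasis ℂ V)).toRingEquiv.toMonoidHom).comp V.ρ

lemma auxMat_trace {G : Type} [Group G] (V : FDRep ℂ G) (g : G) :
    V.character g = trace (auxMat V g) := by
  unfold FDRep.character
  rw [LinearMap.trace_eq_matrix_trace ℂ (Module.finBasis ℂ V)]
  rfl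

lemma aux_char_conj {G : Type} [Group G] [Fintype G] (V : FDRep ℂ G) (g : G) :
    (starRingEnd ℂ) (V.character g) = V.character g⁻¹ := by
  rw [auxMat_trace, auxMat_trace, aux_conj_trace]

lemma aux_integral' {G : Type} [Group G] [Fintype G] {n : Type} [Fintype n] [DecidableEq n]
    (A : G →* Matrix n n ℂ) (g : G) : IsIntegral ℤ (trace (A g)) := by
  refine aux_integral _ (Fintype.card G) Fintype.card_pos ?_
  rw [← map_pow, pow_card_eq_one, map_one]

lemma aux_cayley (A : Matrix (Fin 2) (Fin 2) ℂ) (h : A.det = 1) :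
    A * A = trace A • A - 1 := by
  rw [det_fin_two] at h
  ext i j
  fin_cases i <;> fin_cases j <;> simp [Matrix.mul_apply, Fin.sum_univ_two, trace_fin_two]
  · linear_combination (-1 : ℂ) * h
  · ring
  · ring
  · linear_combination (-1 : ℂ) * h

lemma aux_tr {A : Matrix (Fin 2) (Fin 2) ℂ} (h : A.det = 1) (m : ℕ) (hm : 0 < m)
    (hA : A ^ m = 1) : (trace A).im = 0 ∧ (trace A).re ≤ 2 ∧ ((trace A).re = 2 → A = 1) := by
  obtain ⟨z, hz⟩ := IsAlgClosed.exists_root A.charpoly (by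
    rw [Matrix.charpoly_degree_eq_dim]; simp)
  have hp := aux_root_pow A m hA z hz
  have hn : ‖z‖ = 1 := Complex.norm_eq_one_of_pow_eq_one hp hm.ne'
  have hq : z * z - trace A * z + 1 = 0 := by
    have := hz
    rw [Polynomial.IsRoot, Matrix.eval_charpoly, det_fin_two] at this
    rw [det_fin_two] at h
    simp [trace_fin_two] at this ⊢
    linear_combination this - h
  have hz1 : z * (starRingEnd ℂ) z = 1 := by
    rw [Complex.mul_conj, Complex.normSq_eq_norm_sq, hn]; simp
  have ht : trace A = z + (starRingEnd ℂ) z := by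
    linear_combination (-trace A + z) * hz1 - (starRingEnd ℂ) z * hq
  have hre : z.re * z.re + z.im * z.im = 1 := by
    have := Complex.normSq_eq_norm_sq z
    rw [hn, Complex.normSq_apply] at this; simpa using this
  refine ⟨by rw [ht]; simp, by rw [ht]; simp; nlinarith, fun h2 => ?_⟩
  have h3 : z.re = 1 := by rw [ht] at h2; simp at h2; linarith
  have h4 : z.im = 0 := by rw [h3] at hre; nlinarith
  have ht2 : trace A = 2 := by
    rw [ht]; apply Complex.ext <;> simp [h3]; norm_num
  have hc := aux_cayley A h
  rw [ht2] at hc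
  have hk : ∀ k : ℕ, A ^ k = 1 + (k : ℂ) • (A - 1) := by
    intro k
    induction k with
    | zero => simp
    | succ k ih =>
      rw [pow_succ, ih, add_mul, smul_mul_assoc, sub_mul, hc, one_mul]
      push_cast
      module
  rw [hk] at hA
  have h5 : (m : ℂ) • (A - 1) = 0 := by simpa using hA
  rcases smul_eq_zero.1 h5 with h6 | h6
  · exfalso; exact hm.ne' (by exact_mod_cast h6)
  · exact sub_eq_zero.1 h6

lemma aux_invol (A : Matrix (Fin 2) (Fin 2) ℂ) (h : A.det = 1) (h2 : A * A = 1) (h1 : A ≠ 1) :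
    A = -1 := by
  have hc := aux_cayley A h
  rw [h2] at hc
  have h3 : trace A • A = (2 : ℂ) • (1 : Matrix (Fin 2) (Fin 2) ℂ) := by
    rw [eq_sub_iff_add_eq] at hc; rw [← hc]; module
  have ht : trace A ≠ 0 := by
    intro h0; rw [h0] at h3
    have := congrFun (congrFun h3 0) 0
    simp at this
  have h4 : A = (2 / trace A) • (1 : Matrix (Fin 2) (Fin 2) ℂ) := by
    rw [div_eq_inv_mul, mul_smul, ← h3, smul_smul, inv_mul_cancel₀ ht, one_smul]
  generalize 2 / trace A = s at h4
  subst h4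
  have : s * s = 1 := by rw [det_fin_two] at h; simpa using h
  rcases mul_self_eq_one_iff.1 this with rfl | rfl
  · simp at h1
  · simp

lemma aux_schur {G : Type} [Group G] (V : FDRep ℂ G) [Simple V] (z : G)
    (hz : ∀ g, z * g = g * z) : ∃ s : ℂ, V.ρ z = s • LinearMap.id := by
  let f : V ⟶ V := ⟨Action.ρ V z, fun g => by
    have := congrArg (Action.ρ V) (hz g)
    rw [map_mul, map_mul] at this
    exact this⟩
  obtain ⟨s, hs⟩ := endomorphism_simple_eq_smul_id ℂ f
  refine ⟨s, ?_⟩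
  have h1 := congrArg (fun t : V ⟶ V => t.hom.hom.hom) hs
  exact h1.symm


lemma aux_pos {G : Type} [Group G] [Fintype G] {κ : Type} [Fintype κ] [DecidableEq κ]
    (χ : κ → G → ℂ) (t : G → ℝ) (ht : ∀ g, t g ≤ 2) (ht1 : ∀ g, t g = 2 → g = 1)
    (ho : ∀ i j, (Fintype.card G : ℂ)⁻¹ * ∑ g : G, χ i g * (starRingEnd ℂ) (χ j g) =
      if i = j then 1 else 0)
    (h0 : ∀ i, ∑ g : G, χ i g = 0)
    (c : κ → κ → ℝ)
    (hc : ∀ i j, (c i j : ℂ) = (Fintype.card G : ℂ)⁻¹ *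
      ∑ g : G, χ i g * (t g : ℂ) * (starRingEnd ℂ) (χ j g))
    (x : κ → ℝ) (hx : x ≠ 0) :
    0 < ∑ i, ∑ j, x i * x j * (2 * (if i = j then 1 else 0) - c i j) := by
  set F : G → ℂ := fun g => ∑ i, (x i : ℂ) * χ i g with hF
  have key : ∑ i, ∑ j, x i * x j * (2 * (if i = j then 1 else 0) - c i j) =
      (Fintype.card G : ℝ)⁻¹ * ∑ g : G, (2 - t g) * Complex.normSq (F g) := by
    have hh : ((∑ i, ∑ j, x i * x j * (2 * (if i = j then 1 else 0) - c i j) : ℝ) : ℂ) =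
      (((Fintype.card G : ℝ)⁻¹ * ∑ g : G, (2 - t g) * Complex.normSq (F g) : ℝ) : ℂ) := by
      push_cast
      simp_rw [← Complex.mul_conj, hc]
      have e : ∀ i j : κ, (((if i = j then 1 else 0 : ℝ)) : ℂ) =
          (Fintype.card G : ℂ)⁻¹ * ∑ g : G, χ i g * (starRingEnd ℂ) (χ j g) := by
        intro i j; rw [ho]; split_ifs <;> simp
      simp only [e]
      have e2 : ∀ i j : κ, (x i : ℂ) * x j * (2 * ((Fintype.card G : ℂ)⁻¹ *
          ∑ g : G, χ i g * (starRingEnd ℂ) (χ j g)) - (Fintype.card G : ℂ)⁻¹ *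
          ∑ g : G, χ i g * (t g : ℂ) * (starRingEnd ℂ) (χ j g)) = (Fintype.card G : ℂ)⁻¹ *
          ∑ g : G, (2 - (t g : ℂ)) * ((x i * χ i g) * (x j * (starRingEnd ℂ) (χ j g))) := by
        intro i j
        rw [mul_left_comm 2, ← mul_sub, Finset.mul_sum, ← Finset.sum_sub_distrib, mul_left_comm,
          Finset.mul_sum]
        congr 1
        exact Finset.sum_congr rfl fun g _ => by ring
      simp_rw [e2, ← Finset.mul_sum]
      congr 1
      have e3 : ∀ i, ∑ j, ∑ g : G, (2 - (t g : ℂ)) * ((x i * χ i g) *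
          (x j * (starRingEnd ℂ) (χ j g))) = ∑ g : G, ∑ j, (2 - (t g : ℂ)) * ((x i * χ i g) *
          (x j * (starRingEnd ℂ) (χ j g))) := fun i => Finset.sum_comm
      simp_rw [e3]
      rw [Finset.sum_comm]
      refine Finset.sum_congr rfl fun g _ => ?_
      simp_rw [← Finset.mul_sum, ← Finset.sum_mul, hF, map_sum, map_mul, Complex.conj_ofReal]
    exact_mod_cast hh
  rw [key]
  have hN : (0 : ℝ) < (Fintype.card G : ℝ) := by exact_mod_cast Fintype.card_pos
  refine mul_pos (inv_pos.2 hN) ?_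
  have hnn : ∀ g ∈ Finset.univ, 0 ≤ (2 - t g) * Complex.normSq (F g) := fun g _ =>
    mul_nonneg (by linarith [ht g]) (Complex.normSq_nonneg _)
  refine lt_of_le_of_ne (Finset.sum_nonneg hnn) fun hz => hx ?_
  have hz' := (Finset.sum_eq_zero_iff_of_nonneg hnn).1 hz.symm
  have hF1 : ∀ g, g ≠ 1 → F g = 0 := by
    intro g hg
    rcases mul_eq_zero.1 (hz' g (Finset.mem_univ _)) with h | h
    · exact absurd (ht1 g (by linarith)) hg
    · exact Complex.normSq_eq_zero.1 h
  have hsum : ∑ g, F g = 0 := by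
    simp_rw [hF]; rw [Finset.sum_comm]
    simp_rw [← Finset.mul_sum, h0]; simp
  have hF0 : ∀ g, F g = 0 := by
    intro g
    by_cases hg : g = 1
    · rw [Finset.sum_eq_single 1 (fun b _ hb => hF1 b hb) (by simp)] at hsum
      rw [hg, hsum]
    · exact hF1 g hg
  funext j
  have h1 : (Fintype.card G : ℂ)⁻¹ * ∑ g : G, F g * (starRingEnd ℂ) (χ j g) = x j := by
    simp_rw [hF, Finset.sum_mul]
    rw [Finset.sum_comm]
    simp_rw [mul_assoc, ← Finset.mul_sum]
    rw [Finset.mul_sum]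
    simp_rw [mul_left_comm _ (x _ : ℂ), ho]
    simp
  simp [hF0] at h1
  exact_mod_cast h1.symm

lemma aux_even {G : Type} [Group G] [Fintype G] (hodd : Odd (Fintype.card G)) (f : G → ℂ)
    (hi : ∀ g, IsIntegral ℤ (f g)) (hs : ∀ g, f g⁻¹ = f g) (a : ℂ) (ha : IsIntegral ℤ a)
    (h1 : f 1 = 2 * a) (c : ℕ) (hc : (Fintype.card G : ℂ) * c = ∑ g, f g) : Even c := by
  classical
  let A := integralClosure ℤ ℂ
  let F : G → A := fun g => ⟨f g, hi g⟩
  let a' : A := ⟨a, ha⟩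
  let I : Ideal A := Ideal.span {2}
  have h2 : (Ideal.Quotient.mk I) 2 = 0 :=
    Ideal.Quotient.eq_zero_iff_mem.2 (Ideal.subset_span rfl)
  have hq : ∑ g, (Ideal.Quotient.mk I) (F g) = 0 := by
    rw [← Finset.add_sum_erase _ _ (Finset.mem_univ (1 : G))]
    have hF1 : F 1 = 2 * a' := Subtype.ext h1
    rw [hF1, map_mul, h2, zero_mul, zero_add]
    refine Finset.sum_involution (fun g _ => g⁻¹) ?_ ?_ ?_ ?_
    · intro g _
      have : F g⁻¹ = F g := Subtype.ext (hs g)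
      rw [this, ← two_mul, ← map_ofNat (Ideal.Quotient.mk I) 2, h2, zero_mul]
    · intro g hg _ hgg
      have hg1 : g ≠ 1 := (Finset.mem_erase.1 hg).1
      have hsq : g ^ 2 = 1 := by rw [pow_two]; nth_rewrite 1 [← hgg]; simp
      have hord : orderOf g = 2 := orderOf_eq_prime hsq hg1
      have := orderOf_dvd_card (x := g)
      rw [hord] at this
      exact (Nat.not_even_iff_odd.2 hodd) (even_iff_two_dvd.2 this)
    · intro g hg; simpa using hg
    · intro g _; simp
  rw [← map_sum, Ideal.Quotient.eq_zero_iff_mem, Ideal.mem_span_singleton] at hq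
  obtain ⟨b, hb⟩ := hq
  have hb' : ∑ g, f g = 2 * (b : ℂ) := by
    have := congrArg (fun z : A => (z : ℂ)) hb
    simp [F] at this
    exact this
  have hbq : (b : ℂ) = algebraMap ℚ ℂ ((Fintype.card G : ℚ) * c / 2) := by
    rw [hb'] at hc
    rw [map_div₀, map_mul, map_natCast, map_natCast, map_ofNat, hc]; ring
  have hint : IsIntegral ℤ ((Fintype.card G : ℚ) * c / 2) := by
    have := b.2
    rw [hbq] at this
    exact (isIntegral_algebraMap_iff (algebraMap ℚ ℂ).injective).1 this
  obtain ⟨k, hk⟩ := IsIntegrallyClosed.isIntegral_iff.1 hint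
  have hk' : ((Fintype.card G * c : ℕ) : ℤ) = 2 * k := by
    have : ((Fintype.card G * c : ℕ) : ℚ) = 2 * (k : ℚ) := by
      push_cast
      simp at hk; rw [hk]; ring
    exact_mod_cast this
  have he : Even (Fintype.card G * c) := by
    rw [even_iff_two_dvd]; omega
  rcases Nat.even_mul.1 he with h | h
  · exact absurd h (Nat.not_even_iff_odd.2 hodd)
  · exact h

/-- In the McKay setting, if moreover `G` is nontrivial, then `c_{ii} = 0`
for all `i`, `c_{ij} = c_{ji}`, and the matrix `(2δ_{ij} − c_{ij})_{i,j ∈ I}`, where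
`I = ι ∖ {i₀}` (removing the index of the trivial representation), is symmetric positive
definite. -/
theorem stmt_5 {G : Type} [Group G] [Fintype G] [Nontrivial G]
    (φ : G →* Matrix.SpecialLinearGroup (Fin 2) ℂ) (hφ : Function.Injective φ)
    {ι : Type} [Fintype ι] [DecidableEq ι]
    (ρ : ι → FDRep ℂ G) (hirr : ∀ i, Simple (ρ i))
    (hdist : ∀ i j : ι, i ≠ j → IsEmpty (ρ i ≅ ρ j))
    (hcomplete : ∀ V : FDRep ℂ G, Simple V → ∃ i, Nonempty (V ≅ ρ i))
    (i₀ : ι) (hdim : Module.finrank ℂ (ρ i₀) = 1)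
    (htriv : ∀ g : G, (ρ i₀).ρ g = LinearMap.id)
    (c : ι → ι → ℕ)
    (hc : ∀ i j, (c i j : ℂ) = (Fintype.card G : ℂ)⁻¹ *
      ∑ g : G, (ρ i).character g * Matrix.trace (φ g : Matrix (Fin 2) (Fin 2) ℂ) *
        (starRingEnd ℂ) ((ρ j).character g)) :
    (∀ i, c i i = 0) ∧
    (∀ i j, c i j = c j i) ∧
    (∀ x : {i : ι // i ≠ i₀} → ℝ, x ≠ 0 →
      0 < ∑ i : {i : ι // i ≠ i₀}, ∑ j : {i : ι // i ≠ i₀},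
        x i * x j * (2 * (if (i : ι) = (j : ι) then 1 else 0) - (c i j : ℝ))) := by


  have hchar0 : ∀ g, (ρ i₀).character g = 1 := by
    intro g
    unfold FDRep.character
    rw [htriv, LinearMap.trace_id, hdim]; simp
  let A : G →* Matrix (Fin 2) (Fin 2) ℂ :=
    { toFun := fun g => (φ g : Matrix (Fin 2) (Fin 2) ℂ)
      map_one' := by simp
      map_mul' := by intro a b; simp }
  have hAinj : ∀ g, A g = 1 → g = 1 := by
    intro g hg
    apply hφ
    rw [map_one]
    exact Subtype.ext hg
  have hdet : ∀ g, (A g).det = 1 := fun g => (φ g).2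
  have hpow : ∀ g, A g ^ Fintype.card G = 1 := by
    intro g; rw [← map_pow, pow_card_eq_one, map_one]
  let t : G → ℝ := fun g => (trace (A g)).re
  have htr : ∀ g, trace (A g) = (t g : ℂ) := fun g =>
    Complex.ext rfl (aux_tr (hdet g) _ Fintype.card_pos (hpow g)).1
  have ht2 : ∀ g, t g ≤ 2 := fun g => (aux_tr (hdet g) _ Fintype.card_pos (hpow g)).2.1
  have ht1 : ∀ g, t g = 2 → g = 1 := fun g h =>
    hAinj g ((aux_tr (hdet g) _ Fintype.card_pos (hpow g)).2.2 h)
  have hc' : ∀ i j, (c i j : ℂ) = (Fintype.card G : ℂ)⁻¹ *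
      ∑ g : G, (ρ i).character g * (t g : ℂ) * (starRingEnd ℂ) ((ρ j).character g) := by
    intro i j
    rw [hc]
    congr 1
    refine Finset.sum_congr rfl fun g _ => ?_
    rw [← htr]; rfl
  have hNC : (Fintype.card G : ℂ) ≠ 0 := by exact_mod_cast Fintype.card_ne_zero
  have ho : ∀ i j, (Fintype.card G : ℂ)⁻¹ *
      ∑ g : G, (ρ i).character g * (starRingEnd ℂ) ((ρ j).character g) =
      if i = j then 1 else 0 := by
    intro i j
    have := hirr i
    have := hirr j
    haveI : Invertible (Nat.card G : ℂ) := invertibleOfNonzero (by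
      rw [Nat.card_eq_fintype_card]; exact hNC)
    have := FDRep.char_orthonormal (ρ i) (ρ j)
    rw [Nat.card_eq_fintype_card] at this
    simp_rw [aux_char_conj]
    rw [this]
    by_cases hij : i = j
    · subst hij
      rw [if_pos ⟨Iso.refl _⟩, if_pos rfl]
    · rw [if_neg (not_nonempty_iff.2 (hdist i j hij)), if_neg hij]
  have h0 : ∀ i, i ≠ i₀ → ∑ g : G, (ρ i).character g = 0 := by
    intro i hi
    have := ho i i₀
    simp_rw [hchar0, map_one, mul_one] at this
    rw [if_neg hi] at this
    exact (mul_eq_zero.1 this).resolve_left (inv_ne_zero hNC)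
  have hpos : ∀ x : {i : ι // i ≠ i₀} → ℝ, x ≠ 0 →
      0 < ∑ i : {i : ι // i ≠ i₀}, ∑ j : {i : ι // i ≠ i₀},
        x i * x j * (2 * (if (i : ι) = (j : ι) then 1 else 0) - (c i j : ℝ)) := by
    intro x hx
    have := aux_pos (fun i : {i : ι // i ≠ i₀} => (ρ i).character) t ht2 ht1
      (fun i j => by rw [ho]; simp [Subtype.ext_iff]) (fun i => h0 i i.2)
      (fun i j => (c i j : ℝ)) (fun i j => by rw [← hc' i j]; simp) x hx
    simpa only [Subtype.ext_iff] using this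
  refine ⟨?_, ?_, hpos⟩
  · intro i
    have hlt : c i i < 2 := by
      by_cases hi : i = i₀
      · subst hi
        have h1 : (c i i : ℝ) = (Fintype.card G : ℝ)⁻¹ * ∑ g : G, t g := by
          have := hc' i i
          simp_rw [hchar0, map_one, mul_one, one_mul] at this
          have h' : (((c i i : ℝ)) : ℂ) = (((Fintype.card G : ℝ)⁻¹ * ∑ g : G, t g : ℝ) : ℂ) := by
            push_cast; exact this
          exact Complex.ofReal_injective h'
        obtain ⟨g, hg⟩ := exists_ne (1 : G)
        have h2 : ∑ g : G, t g < ∑ _g : G, (2 : ℝ) :=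
          Finset.sum_lt_sum (fun g _ => ht2 g)
            ⟨g, Finset.mem_univ _, lt_of_le_of_ne (ht2 g) fun h => hg (ht1 g h)⟩
        have hN : (0 : ℝ) < (Fintype.card G : ℝ) := by exact_mod_cast Fintype.card_pos
        have h3 : (c i i : ℝ) < 2 := by
          rw [h1, inv_mul_lt_iff₀ hN]
          simpa using h2
        exact_mod_cast h3
      · have h1 := hpos (Pi.single ⟨i, hi⟩ 1) (by simp)
        rw [Finset.sum_eq_single ⟨i, hi⟩ (fun b _ hb => by simp [Pi.single_eq_of_ne hb])
          (by simp), Finset.sum_eq_single ⟨i, hi⟩ (fun b _ hb => by simp [Pi.single_eq_of_ne hb])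
          (by simp)] at h1
        simp at h1
        have h2 : c i i ≤ 1 := by exact_mod_cast h1
        omega
    have hNc : (Fintype.card G : ℂ) * (c i i : ℂ) = ∑ g : G, (ρ i).character g * (t g : ℂ) *
        (starRingEnd ℂ) ((ρ i).character g) := by
      rw [hc', mul_inv_cancel_left₀ hNC]
    rcases Nat.even_or_odd (Fintype.card G) with hev | hod
    · have : Fact (Nat.Prime 2) := ⟨Nat.prime_two⟩
      obtain ⟨z, hz⟩ := exists_prime_orderOf_dvd_card 2 (even_iff_two_dvd.1 hev)
      have hz1 : z ≠ 1 := by rintro rfl; simp at hz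
      have hzz : z * z = 1 := by rw [← pow_two, ← hz, pow_orderOf_eq_one]
      have hAz : A z = -1 := aux_invol _ (hdet z) (by rw [← map_mul, hzz, map_one])
        fun h => hz1 (hAinj z h)
      have hcen : ∀ g, z * g = g * z := by
        intro g
        have : A (z * g * (g * z)⁻¹) = 1 := by
          have e : A (z * g) = A (g * z) := by rw [map_mul, map_mul, hAz]; simp
          rw [map_mul, e, ← map_mul]; simp
        exact mul_inv_eq_one.1 (hAinj _ this)
      have := hirr i
      obtain ⟨s, hs⟩ := aux_schur (ρ i) z hcen
      have hcz : ∀ g, (ρ i).character (z * g) = s * (ρ i).character g := by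
        intro g
        unfold FDRep.character
        rw [map_mul, hs]
        simp [Module.End.mul_eq_comp]
      have hs1 : s * s = 1 ∨ ∀ g, (ρ i).character g = 0 := by
        by_cases h : ∃ g, (ρ i).character g ≠ 0
        · obtain ⟨g, hg⟩ := h
          left
          have := hcz (z * g)
          rw [← mul_assoc z z g, hzz, one_mul, hcz] at this
          apply mul_right_cancel₀ hg
          rw [one_mul, mul_assoc, ← this]
        · right; push Not at h; exact h
      have hss : ∀ g, (ρ i).character (z * g) * (starRingEnd ℂ) ((ρ i).character (z * g)) =
          (ρ i).character g * (starRingEnd ℂ) ((ρ i).character g) := by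
        intro g
        rcases hs1 with h | h
        · rw [hcz]
          rcases mul_self_eq_one_iff.1 h with rfl | rfl <;> simp
        · simp [h]
      have htz : ∀ g, (t (z * g) : ℂ) = - t g := by
        intro g
        rw [← htr, ← htr, map_mul, hAz]; simp
      have hS : ∑ g : G, (ρ i).character g * (t g : ℂ) *
        (starRingEnd ℂ) ((ρ i).character g) = - ∑ g : G, (ρ i).character g * (t g : ℂ) *
        (starRingEnd ℂ) ((ρ i).character g) := by
        rw [← Finset.sum_neg_distrib]
        refine (Fintype.sum_equiv (Equiv.mulLeft z) _ _ fun g => ?_).symm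
        rw [Equiv.coe_mulLeft, htz]
        linear_combination (t g : ℂ) * hss g
      have hS0 := self_eq_neg.1 hS
      rw [hS0] at hNc
      have := (mul_eq_zero.1 hNc).resolve_left hNC
      exact_mod_cast this
    · have hchi : ∀ g, IsIntegral ℤ ((ρ i).character g) := by
        intro g; rw [auxMat_trace]; exact aux_integral' _ g
      have htinv : ∀ g, t g⁻¹ = t g := by
        intro g
        have := aux_conj_trace A g
        rw [htr, htr, Complex.conj_ofReal] at this
        exact_mod_cast this.symm
      have hev : Even (c i i) := by
        refine aux_even hod _ (fun g => ?_) (fun g => ?_)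
          ((ρ i).character 1 * (ρ i).character 1) ((hchi 1).mul (hchi 1)) ?_ _ hNc
        · rw [aux_char_conj, ← htr]
          exact ((hchi g).mul (aux_integral' A g)).mul (hchi g⁻¹)
        · rw [aux_char_conj, aux_char_conj, htinv, inv_inv]; ring
        · rw [aux_char_conj, inv_one, ← htr, map_one]
          simp; ring
      obtain ⟨k, hk⟩ := hev
      omega
  · intro i j
    have h : (starRingEnd ℂ) (c i j : ℂ) = c j i := by
      rw [hc', hc', map_mul, map_sum]
      congr 1
      · simp
      · refine Finset.sum_congr rfl fun g _ => ?_
        simp only [map_mul, Complex.conj_conj, Complex.conj_ofReal]; ring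
    rw [Complex.conj_natCast] at h
    exact_mod_cast h
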